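/- arXiv:2410.01587 — 3 statements merged into one kernel-verified Lean document; each statement's English description precedes it below -/
import Mathlib

section
/- Let A = J(i,n), the n×n Jordan block with the imaginary unit i on the diagonal, regarded as an element of SL(n,ℍ). Then there exists an involution g ∈ SL(n,ℍ) (g² = Iₙ), with all entries complex, such that gAg⁻¹ = −A⁻¹; explicitly, the upper triangular matrix g = [x_{p,q}] with x_{p,q} = 0 for p > q and for q = n, p ≠ n; x_{n,n} = 1; and x_{p,q} = i·x_{p+1,q} − x_{p+1,q+1} for 1 ≤ p ≤ q ≤ n−1, works. -/
set_option maxHeartbeats 1000000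

noncomputable section

open Matrix

/-- The embedding of `ℂ` into the real quaternions, onto the subalgebra spanned by `1` and `i`. -/
def C2H (z : ℂ) : Quaternion ℝ := ⟨z.re, z.im, 0, 0⟩

/-- For a quaternion `q = a + b i + c j + d k`, its first complex coordinate `a + b i`. -/
def qc1 (q : Quaternion ℝ) : ℂ := ⟨q.re, q.imI⟩

/-- For a quaternion `q = a + b i + c j + d k`, its second complex coordinate `c + d i`,
so that `q = qc1 q + (qc2 q) * j`. -/
def qc2 (q : Quaternion ℝ) : ℂ := ⟨q.imJ, q.imK⟩

/-- The embedding `Φ` of quaternionic square matrices into complex matrices of doubled size: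
writing `A = A₁ + A₂ · j`, `Φ A` is the block matrix `[[A₁, A₂], [-conj A₂, conj A₁]]`. -/
def Phi {m : Type*} (A : Matrix m m (Quaternion ℝ)) : Matrix (m ⊕ m) (m ⊕ m) ℂ :=
  Matrix.fromBlocks (A.map qc1) (A.map qc2)
    (-(A.map fun q => (starRingEnd ℂ) (qc2 q))) (A.map fun q => (starRingEnd ℂ) (qc1 q))

/-- The determinant of a quaternionic matrix `A`: the determinant of `Φ A`.
`A ∈ GL(n, ℍ)` means `qdet A ≠ 0`, and `A ∈ SL(n, ℍ)` means `qdet A = 1`. -/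
def qdet {m : Type*} [Fintype m] [DecidableEq m] (A : Matrix m m (Quaternion ℝ)) : ℂ :=
  (Phi A).det

/-- The `m × m` Jordan block `J(λ, m)` over `ℂ`: `λ` on the diagonal, `1` on the
superdiagonal, `0` elsewhere. -/
def jordanC (lam : ℂ) (m : ℕ) : Matrix (Fin m) (Fin m) ℂ :=
  Matrix.of fun i j => if (j : ℕ) = (i : ℕ) then lam else if (j : ℕ) = (i : ℕ) + 1 then 1 else 0

/-- The `m × m` Jordan block `J(λ, m)`, `λ ∈ ℂ`, viewed as a quaternionic matrix. -/
def jordanH (lam : ℂ) (m : ℕ) : Matrix (Fin m) (Fin m) (Quaternion ℝ) :=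
  (jordanC lam m).map C2H

/-- Entries of the explicit reversing matrix for `J(i, n)` (with `1`-based indices):
`x p q = 0` for `p > q` or `q > n`; `x p n = 0` for `p ≠ n`; `x n n = 1`; and
`x p q = i · x (p+1) q - x (p+1) (q+1)` for `1 ≤ p ≤ q ≤ n - 1`. -/
def iotaAux (n : ℕ) (p q : ℕ) : ℂ :=
  if h1 : q < p ∨ n < q then 0
  else if h2 : q = n then (if p = n then 1 else 0)
  else Complex.I * iotaAux n (p + 1) q - iotaAux n (p + 1) (q + 1)
termination_by n - p
decreasing_by all_goals omega

/-- The explicit complex upper triangular matrix conjugating `J(i, n)` to `-J(i, n)⁻¹`. -/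
def gIota (n : ℕ) : Matrix (Fin n) (Fin n) ℂ :=
  Matrix.of fun p q => iotaAux n ((p : ℕ) + 1) ((q : ℕ) + 1)

/-!
Write `J = J(i, n)` and `g = gIota n`. The recursion for the entries of `g` is, entry by entry, the
relation `J g J = -g`, which for invertible `J` says `g J g⁻¹ = -J⁻¹`. Applying it twice shows that
`g²` commutes with `J`. The last basis vector generates `ℂⁿ` as a `ℂ[J]`-module, so a matrix
commuting with `J` is determined by its last column, and the last column of `g²` is that of `1`.
Hence `g² = 1`. A complex matrix `M` has quaternionic determinant `|det M|²`, which is `1` for an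
involution.
-/

section HasDistribNeg

lemma commute_mul_self_of_mul_mul_eq_neg {S : Type*} [Semigroup S] [HasDistribNeg S] {a g : S}
    (h : a * g * a = -g) : Commute a (g * g) :=
  calc
    a * (g * g) = a * g * -(a * g * a) := by rw [h, neg_neg, mul_assoc]
    _ = -(a * g * a) * (g * a) := by simp only [mul_neg, neg_mul, mul_assoc]
    _ = g * g * a := by rw [h, neg_neg, mul_assoc]

lemma mul_mul_inv_eq_neg_inv_iff {G : Type*} [Group G] [HasDistribNeg G] {a g : G} :
    g * a * g⁻¹ = -a⁻¹ ↔ a * g * a = -g := by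
  rw [mul_inv_eq_iff_eq_mul, neg_mul, ← mul_neg, eq_inv_mul_iff_mul_eq, mul_assoc]

end HasDistribNeg

section Quaternion

variable {m : Type*}

lemma C2H_eq_ofComplex : C2H = Quaternion.ofComplex := rfl

lemma qc1_C2H (z : ℂ) : qc1 (C2H z) = z := rfl

lemma qc2_C2H (z : ℂ) : qc2 (C2H z) = 0 := rfl

lemma Phi_map_C2H (M : Matrix m m ℂ) :
    Phi (M.map C2H) = fromBlocks M 0 0 (M.map (starRingEnd ℂ)) := by
  ext (p | p) (q | q) <;> simp [Phi, qc1_C2H, qc2_C2H]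

variable [Fintype m] [DecidableEq m]

lemma qdet_map_C2H (M : Matrix m m ℂ) : qdet (M.map C2H) = ‖M.det‖ ^ 2 := by
  have det_conj : (M.map (starRingEnd ℂ)).det = starRingEnd ℂ M.det :=
    ((starRingEnd ℂ).map_det M).symm
  rw [qdet, Phi_map_C2H, det_fromBlocks_zero₂₁, det_conj, Complex.mul_conj']

lemma qdet_map_C2H_of_mul_self_eq_one {M : Matrix m m ℂ} (hM : M * M = 1) :
    qdet (M.map C2H) = 1 := by
  have det_sq : M.det ^ 2 = 1 := by rw [sq, ← det_mul, hM, det_one]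
  rw [qdet_map_C2H, Complex.norm_eq_one_of_pow_eq_one det_sq two_ne_zero]
  norm_num

end Quaternion

section JordanBlock

variable {m : Type*} {n : ℕ} (c : ℂ)

lemma mul_jordanC_apply_zero (M : Matrix m (Fin (n + 1)) ℂ) (p : m) :
    (M * jordanC c (n + 1)) p 0 = c * M p 0 := by
  have col (j : Fin (n + 1)) : jordanC c (n + 1) j 0 = if j = 0 then c else 0 := by
    simp only [jordanC, of_apply, Fin.ext_iff, Fin.val_zero]
    grind
  simp [mul_apply, col, mul_comm]

lemma mul_jordanC_apply_succ (M : Matrix m (Fin (n + 1)) ℂ) (p : m) (q : Fin n) :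
    (M * jordanC c (n + 1)) p q.succ = c * M p q.succ + M p q.castSucc := by
  have col (j : Fin (n + 1)) : jordanC c (n + 1) j q.succ =
      (if j = q.succ then c else 0) + if j = q.castSucc then 1 else 0 := by
    simp only [jordanC, of_apply, Fin.ext_iff, Fin.val_succ, Fin.val_castSucc]
    grind
  simp [mul_apply, col, mul_add, Finset.sum_add_distrib, mul_comm]

lemma jordanC_mul_apply_last (M : Matrix (Fin (n + 1)) m ℂ) (q : m) :
    (jordanC c (n + 1) * M) (Fin.last n) q = c * M (Fin.last n) q := by
  have row (j : Fin (n + 1)) :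
      jordanC c (n + 1) (Fin.last n) j = if j = Fin.last n then c else 0 := by
    simp only [jordanC, of_apply, Fin.ext_iff, Fin.val_last]
    grind
  simp [mul_apply, row]

lemma jordanC_mul_apply_castSucc (M : Matrix (Fin (n + 1)) m ℂ) (p : Fin n) (q : m) :
    (jordanC c (n + 1) * M) p.castSucc q = c * M p.castSucc q + M p.succ q := by
  have row (j : Fin (n + 1)) : jordanC c (n + 1) p.castSucc j =
      (if j = p.castSucc then c else 0) + if j = p.succ then 1 else 0 := by
    simp only [jordanC, of_apply, Fin.ext_iff, Fin.val_succ, Fin.val_castSucc]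
    grind
  simp [mul_apply, row, add_mul, Finset.sum_add_distrib]

variable {c}

lemma eq_of_commute_jordanC_of_last_col_eq {M N : Matrix (Fin (n + 1)) (Fin (n + 1)) ℂ}
    (hM : Commute (jordanC c (n + 1)) M) (hN : Commute (jordanC c (n + 1)) N)
    (hlast : ∀ p, M p (Fin.last n) = N p (Fin.last n)) : M = N := by
  suffices col_eq : ∀ q p, M p q = N p q from Matrix.ext fun p q ↦ col_eq q p
  intro q
  induction q using Fin.reverseInduction with
  | last => exact hlast
  | cast q ih =>
    intro p
    have col_of_commute {L : Matrix (Fin (n + 1)) (Fin (n + 1)) ℂ}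
        (hL : Commute (jordanC c (n + 1)) L) :
        L p q.castSucc = (jordanC c (n + 1) * L) p q.succ - c * L p q.succ := by
      rw [hL.eq, mul_jordanC_apply_succ, add_sub_cancel_left]
    simp only [col_of_commute hM, col_of_commute hN, mul_apply, ih]

end JordanBlock

section ReversingMatrix

lemma iotaAux_of_lt {n p q : ℕ} (h : q < p) : iotaAux n p q = 0 := by
  rw [iotaAux, dif_pos (Or.inl h)]

lemma iotaAux_last (n p : ℕ) : iotaAux n p n = if p = n then 1 else 0 := by
  rw [iotaAux]
  grind

lemma iotaAux_eq_sub {n q : ℕ} (p : ℕ) (hq : q < n) :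
    iotaAux n p q = Complex.I * iotaAux n (p + 1) q - iotaAux n (p + 1) (q + 1) := by
  rcases lt_or_ge q p with h | h
  · simp [iotaAux_of_lt h, iotaAux_of_lt (Nat.lt_succ_of_lt h),
      iotaAux_of_lt (Nat.succ_lt_succ h)]
  · rw [iotaAux, dif_neg (by lia), dif_neg (by lia)]

lemma gIota_apply_last (n : ℕ) (p : Fin (n + 1)) :
    gIota (n + 1) p (Fin.last n) = (1 : Matrix (Fin (n + 1)) (Fin (n + 1)) ℂ) p (Fin.last n) := by
  simp [gIota, iotaAux_last, one_apply, Fin.ext_iff]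

lemma jordanC_I_mul_gIota_apply {n : ℕ} (p q : Fin n) :
    (jordanC Complex.I n * gIota n) p q =
      Complex.I * iotaAux n (p + 1) (q + 1) + iotaAux n (p + 2) (q + 1) := by
  cases n with
  | zero => exact p.elim0
  | succ n =>
    cases p using Fin.lastCases with
    | last =>
      rw [jordanC_mul_apply_last, Fin.val_last, iotaAux_of_lt (p := n + 2) (by lia), add_zero]
      rfl
    | cast p => exact jordanC_mul_apply_castSucc ..

lemma jordanC_I_mul_gIota_mul_jordanC_I (n : ℕ) :
    jordanC Complex.I n * gIota n * jordanC Complex.I n = -gIota n := by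
  cases n with
  | zero => exact Subsingleton.elim _ _
  | succ n =>
    ext p q
    change _ = -iotaAux (n + 1) (p + 1) (q + 1)
    cases q using Fin.cases with
    | zero =>
      rw [mul_jordanC_apply_zero, jordanC_I_mul_gIota_apply, Fin.val_zero,
        iotaAux_of_lt (p := p + 2) (by lia)]
      linear_combination iotaAux (n + 1) (p + 1) (0 + 1) * Complex.I_mul_I
    | succ q =>
      have recursion := iotaAux_eq_sub (p + 1) (Nat.succ_lt_succ q.isLt)
      rw [mul_jordanC_apply_succ, jordanC_I_mul_gIota_apply, jordanC_I_mul_gIota_apply,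
        Fin.val_succ, Fin.val_castSucc]
      linear_combination Complex.I * recursion +
        (iotaAux (n + 1) (p + 1) (q + 1 + 1) + iotaAux (n + 1) (p + 2) (q + 1)) * Complex.I_mul_I

lemma gIota_mul_self (n : ℕ) : gIota n * gIota n = 1 := by
  cases n with
  | zero => exact Subsingleton.elim _ _
  | succ n =>
    have commute_sq : Commute (jordanC Complex.I (n + 1)) (gIota (n + 1) * gIota (n + 1)) :=
      commute_mul_self_of_mul_mul_eq_neg (jordanC_I_mul_gIota_mul_jordanC_I (n + 1))
    refine eq_of_commute_jordanC_of_last_col_eq commute_sq (.one_right _) fun p ↦ ?_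
    calc
      (gIota (n + 1) * gIota (n + 1)) p (Fin.last n) = gIota (n + 1) p (Fin.last n) := by
        simp [mul_apply, gIota_apply_last, one_apply]
      _ = _ := gIota_apply_last n p

end ReversingMatrix

/-- For `A = J(i, n) ∈ SL(n, ℍ)` there is an involution `g ∈ SL(n, ℍ)` with complex entries
such that `g A g⁻¹ = -A⁻¹`; explicitly, the upper triangular matrix `gIota n` works. -/
theorem jordan_I_conj_to_neg_inv_by_involution (n : ℕ)
    (A : (Matrix (Fin n) (Fin n) (Quaternion ℝ))ˣ) (hA : A.val = jordanH Complex.I n) :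
    ∃ g : (Matrix (Fin n) (Fin n) (Quaternion ℝ))ˣ,
      g.val = (gIota n).map C2H ∧ qdet g.val = 1 ∧ g * g = 1 ∧ g * A * g⁻¹ = -A⁻¹ := by
  set G : Matrix (Fin n) (Fin n) (Quaternion ℝ) := Quaternion.ofComplex.mapMatrix (gIota n) with hG
  have sq_eq_one : G * G = 1 := by rw [hG, ← map_mul, gIota_mul_self, map_one]
  have mul_mul_eq_neg : A.val * G * A.val = -G := by
    rw [hA, jordanH, C2H_eq_ofComplex, ← AlgHom.mapMatrix_apply, hG, ← map_mul, ← map_mul,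
      jordanC_I_mul_gIota_mul_jordanC_I, map_neg]
  exact ⟨⟨G, G, sq_eq_one, sq_eq_one⟩, rfl, qdet_map_C2H_of_mul_self_eq_one (gIota_mul_self n),
    Units.ext sq_eq_one, mul_mul_inv_eq_neg_inv_iff.mpr (Units.ext mul_mul_eq_neg)⟩
end
end

section
/- Let A ∈ SL(n,ℍ). Then the following are equivalent: (1) there exists g ∈ SL(n,ℍ) with gAg⁻¹ = −A⁻¹; (2) there exists an involution h ∈ SL(n,ℍ) (h² = Iₙ) with hAh⁻¹ = −A⁻¹. -/
/-!
Suppose `x a x⁻¹ = -a⁻¹`. Then `(x a)² = -x²`, and `x`, `x a` both conjugate `a` to `-a⁻¹`.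
In the finite-dimensional commutative algebra `ℝ[x²]` every unit is, factor by factor, plus or minus
a square. Using `x` on the factors where `x²` is a square, `x a` on those where `-x²` is one, and
dividing by the square root gives an involution that still conjugates `a` to `-a⁻¹`.

An involution `1 - 2e` over `ℍ` is itself a square: let `i` act on the range of `e` in some basis.
Its determinant is therefore the square of a real number, and it squares to `1`.
-/

set_option maxHeartbeats 1000000

noncomputable section

open Matrix

section RealAlgebra

open scoped IsMulCommutative

lemma isSquare_or_isSquare_neg_of_isAlgebraic_real {K : Type*} [Field K] [Algebra ℝ K]
    [Algebra.IsAlgebraic ℝ K] (w : K) : IsSquare w ∨ IsSquare (-w) := by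
  rcases Real.nonempty_algEquiv_or K with ⟨⟨φ⟩⟩ | ⟨⟨φ⟩⟩
  · have isSquare_of_nonneg {v : K} (hv : 0 ≤ φ v) : IsSquare v := by
      simpa using (Real.isSquare_iff.mpr hv).map φ.symm
    rcases le_total 0 (φ w) with hw | hw
    · exact .inl (isSquare_of_nonneg hw)
    · exact .inr (isSquare_of_nonneg (by simpa using hw))
  · have hw : IsSquare (φ w) := by
      obtain ⟨z, hz⟩ := IsAlgClosed.exists_pow_nat_eq (φ w) two_pos
      exact ⟨z, by rw [← hz, sq]⟩
    exact .inl (by simpa using hw.map φ.symm)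

lemma isSquare_of_isNilpotent_mul_self_sub {R : Type*} [CommRing R] [Invertible (2 : R)] {u x : R}
    (hu : IsUnit u) (hx : IsNilpotent (x * x - u)) : IsSquare u := by
  have hxx : IsUnit (x * x) := by
    simpa using hx.isUnit_add_right_of_commute hu (Commute.all _ _)
  have hderiv : IsUnit (2 * x) := (isUnit_of_invertible 2).mul (isUnit_of_mul_isUnit_left hxx)
  obtain ⟨r, ⟨-, hr⟩, -⟩ := Polynomial.existsUnique_nilpotent_sub_and_aeval_eq_zero
    (P := Polynomial.X ^ 2 - Polynomial.C u) (x := x)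
    (by simpa [sq] using hx) (by simpa [one_add_one_eq_two] using hderiv)
  refine ⟨r, ?_⟩
  simpa [sq, sub_eq_zero, eq_comm] using hr

lemma exists_isIdempotentElem_isSquare_pi {ι : Type*} {K : ι → Type*} [∀ i, CommRing (K i)]
    (w : ∀ i, K i) (hw : ∀ i, IsSquare (w i) ∨ IsSquare (-w i)) :
    ∃ e : ∀ i, K i, IsIdempotentElem e ∧ IsSquare ((1 - 2 * e) * w) := by
  have hfactor (i : ι) : ∃ e : K i, IsIdempotentElem e ∧ IsSquare ((1 - 2 * e) * w i) := by
    rcases hw i with h | h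
    · exact ⟨0, .zero, by simpa using h⟩
    · exact ⟨1, .one, by convert h using 1; ring⟩
  choose e he s hs using hfactor
  exact ⟨e, funext he, s, funext hs⟩

lemma one_sub_two_mul_mul_self {R : Type*} [Ring R] {e : R}
    (he : IsIdempotentElem e) : (1 - 2 * e) * (1 - 2 * e) = 1 := by
  simp only [mul_sub, sub_mul, two_mul, add_mul, mul_add, mul_one, one_mul, he.eq]
  abel

lemma exists_isIdempotentElem_isSquare_of_surjective {R S : Type*} [CommRing R] [CommRing S]
    [Invertible (2 : R)] {f : R →+* S} (hf : Function.Surjective f)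
    (hker : ∀ x ∈ RingHom.ker f, IsNilpotent x) {u : R} (hu : IsUnit u)
    (h : ∃ e : S, IsIdempotentElem e ∧ IsSquare ((1 - 2 * e) * f u)) :
    ∃ e : R, IsIdempotentElem e ∧ IsSquare ((1 - 2 * e) * u) := by
  obtain ⟨_, he', s, hs⟩ := h
  obtain ⟨e, he, rfl⟩ := exists_isIdempotentElem_eq_of_ker_isNilpotent f hker _ (hf _) he'
  obtain ⟨x, rfl⟩ := hf s
  have hunit : IsUnit (1 - 2 * e) := .of_mul_eq_one _ (one_sub_two_mul_mul_self he)
  refine ⟨e, he, isSquare_of_isNilpotent_mul_self_sub (x := x) (hunit.mul hu) (hker _ ?_)⟩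
  rw [RingHom.mem_ker, map_sub, map_mul, ← hs]
  simp only [map_mul, map_sub, map_one, map_ofNat, sub_self]

lemma exists_isIdempotentElem_isSquare_of_isUnit {T : Type*} [CommRing T] [Algebra ℝ T]
    [Module.Finite ℝ T] {w : T} (hw : IsUnit w) :
    ∃ e : T, IsIdempotentElem e ∧ IsSquare ((1 - 2 * e) * w) := by
  have : IsArtinianRing T := .of_finite ℝ T
  let : Invertible (2 : T) := (Invertible.map (algebraMap ℝ T) 2).copy _ (map_ofNat _ 2).symm
  let f : T →+* ∀ I : MaximalSpectrum T, T ⧸ I.asIdeal :=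
    (IsArtinianRing.quotNilradicalEquivPi T : _ →+* _).comp (Ideal.Quotient.mk (nilradical T))
  refine exists_isIdempotentElem_isSquare_of_surjective (f := f)
    ((IsArtinianRing.quotNilradicalEquivPi T).surjective.comp Ideal.Quotient.mk_surjective)
    (fun x hx ↦ ?_) hw (exists_isIdempotentElem_isSquare_pi _ fun I ↦ ?_)
  · simpa [RingHom.mem_ker, f, Ideal.Quotient.eq_zero_iff_mem, mem_nilradical] using hx
  · let := Ideal.Quotient.field I.asIdeal
    exact isSquare_or_isSquare_neg_of_isAlgebraic_real _

lemma exists_isIdempotentElem_mul_self_eq_and_commute {M : Type*} [Ring M] [Algebra ℝ M]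
    [Module.Finite ℝ M] {w : M} (hw : IsUnit w) :
    ∃ e s : M, IsIdempotentElem e ∧ s * s = (1 - 2 * e) * w ∧
      ∀ z, Commute w z → Commute e z ∧ Commute s z := by
  let w' : Algebra.adjoin ℝ {w} := ⟨w, Algebra.self_mem_adjoin_singleton ℝ w⟩
  have hw' : IsUnit w' := by
    have := IsArtinianRing.of_finite ℝ (Algebra.adjoin ℝ {w})
    refine IsArtinianRing.isUnit_of_mem_nonZeroDivisors ?_
    exact comap_nonZeroDivisors_le_of_injective (f := (Algebra.adjoin ℝ {w}).val)
      Subtype.val_injective hw.mem_nonZeroDivisors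
  have commute_of_mem (u : Algebra.adjoin ℝ {w}) {z : M} (hz : Commute w z) : Commute (u : M) z :=
    (Algebra.commute_of_mem_adjoin_singleton_of_commute u.2 hz.symm).symm
  obtain ⟨e, he, s, hs⟩ := exists_isIdempotentElem_isSquare_of_isUnit hw'
  exact ⟨e, s, congrArg Subtype.val he, congrArg Subtype.val hs.symm,
    fun z hz ↦ ⟨commute_of_mem e hz, commute_of_mem s hz⟩⟩

lemma mul_add_mul_one_sub_mul_self {R : Type*} [Ring R] {e p q : R} (he : IsIdempotentElem e)
    (hp : Commute e p) (hq : Commute e q) :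
    (p * e + q * (1 - e)) * (p * e + q * (1 - e)) = p * p * e + q * q * (1 - e) := by
  have hp' : Commute (1 - e) p := (Commute.one_left p).sub_left hp
  have hq' : Commute (1 - e) q := (Commute.one_left q).sub_left hq
  simp only [mul_add, add_mul, hp.mul_mul_mul_comm, hp'.mul_mul_mul_comm, hq.mul_mul_mul_comm,
    hq'.mul_mul_mul_comm, he.eq, he.one_sub.eq, he.mul_one_sub_self, he.one_sub_mul_self,
    mul_zero, add_zero, zero_add]

lemma exists_involution_of_mul_self_eq_neg {M : Type*} [Ring M] [Algebra ℝ M] [Module.Finite ℝ M]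
    {x y : Mˣ} (hxy : y * y = -(x * x)) :
    ∃ k : Mˣ, k * k = 1 ∧ ∀ a b : Mˣ, SemiconjBy x a b → SemiconjBy y a b →
      Commute (x * x) a → SemiconjBy k a b := by
  obtain ⟨e, s, he, hs, hcomm⟩ :=
    exists_isIdempotentElem_mul_self_eq_and_commute (x * x)⁻¹.isUnit
  have commute_of_commute_sq {z : Mˣ} (hz : Commute (x * x) z) :
      Commute e z ∧ Commute s z := hcomm z hz.inv_left.units_val
  obtain ⟨hex, hsx⟩ := commute_of_commute_sq ((Commute.refl x).mul_left (.refl x))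
  obtain ⟨hey, hsy⟩ := commute_of_commute_sq (z := y) <| by
    rw [← neg_neg (x * x), ← hxy]
    exact ((Commute.refl y).mul_left (.refl y)).neg_left
  obtain ⟨hew, -⟩ := hcomm _ (.refl _)
  obtain ⟨-, hse⟩ := hcomm e hew.symm
  let v : M := y * e + x * (1 - e)
  have hvv : v * v = x * x * (1 - 2 * e) := by
    have hyy : (y * y : M) = -(x * x) := by exact_mod_cast congrArg Units.val hxy
    rw [mul_add_mul_one_sub_mul_self he hey hex, hyy]
    noncomm_ring
  have hsv : Commute s v := (hsy.mul_right hse).add_right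
    (hsx.mul_right ((Commute.one_right s).sub_right hse))
  have hk : v * s * (v * s) = 1 := by
    calc v * s * (v * s) = x * x * ((1 - 2 * e) * (1 - 2 * e)) * (x * x)⁻¹.val := by
          rw [hsv.mul_mul_mul_comm, hvv, hs]
          simp only [mul_assoc]
      _ = 1 := by
          rw [one_sub_two_mul_mul_self he, mul_one, ← Units.val_mul, Units.mul_inv]
  refine ⟨⟨v * s, v * s, hk, hk⟩, Units.ext hk, fun a b hxab hyab hxxa ↦ .units_of_val ?_⟩
  obtain ⟨hea, hsa⟩ := commute_of_commute_sq hxxa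
  have hva : SemiconjBy v a b := (hyab.units_val.mul_left hea).add_left
    (hxab.units_val.mul_left ((Commute.one_left (a : M)).sub_left hea))
  exact hva.mul_left hsa

lemma exists_involution_conj_eq_neg_inv {M : Type*} [Ring M] [Algebra ℝ M] [Module.Finite ℝ M]
    {a x : Mˣ} (h : x * a * x⁻¹ = -a⁻¹) : ∃ k : Mˣ, k * k = 1 ∧ k * a * k⁻¹ = -a⁻¹ := by
  have hxa : SemiconjBy x a (-a⁻¹) := mul_inv_eq_iff_eq_mul.mp h
  have hxa' : SemiconjBy x (-a⁻¹) a := by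
    have := hxa.inv_right.neg_right
    rwa [inv_neg, inv_inv, neg_neg] at this
  have hsq : (x * a) * (x * a) = -(x * x) := by
    calc (x * a) * (x * a) = x * (a * (-a⁻¹ * x)) := by rw [mul_assoc, hxa.eq]
      _ = -(x * x) := by simp
  obtain ⟨k, hk, hka⟩ := exists_involution_of_mul_self_eq_neg hsq
  exact ⟨k, hk, mul_inv_eq_iff_eq_mul.mpr
    (hka a (-a⁻¹) hxa (hxa.mul_left (Commute.refl a)) (hxa'.mul_left hxa))⟩

end RealAlgebra

section SquareRoots

variable {D : Type*} {i : D}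

lemma exists_end_mul_self_eq_neg_one [Ring D] (hi : i * i = -1) (W : Type*) [AddCommGroup W]
    [Module D W] [Module.Free D W] : ∃ f : Module.End D W, f * f = -1 := by
  let b := Module.Free.chooseBasis D W
  refine ⟨b.constr ℕ (i • ⇑b), b.ext fun j ↦ ?_⟩
  simp [smul_smul, hi]

lemma isSquare_one_sub_two_mul_of_isIdempotentElem_end [DivisionRing D] (hi : i * i = -1)
    {V : Type*} [AddCommGroup V] [Module D V] {e : Module.End D V} (he : IsIdempotentElem e) :
    IsSquare (1 - 2 * e) := by
  let W := LinearMap.range e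
  obtain ⟨f, hf⟩ := exists_end_mul_self_eq_neg_one hi W
  have he_coe (w : W) : e w = w := (LinearMap.IsIdempotentElem.mem_range_iff he).mp w.2
  let g : Module.End D V := W.subtype ∘ₗ f ∘ₗ e.rangeRestrict
  have hge : g * e = g := by
    have : e.rangeRestrict ∘ₗ e = e.rangeRestrict :=
      LinearMap.ext fun v ↦ Subtype.ext (LinearMap.congr_fun he.eq v)
    simp only [g, Module.End.mul_eq_comp, LinearMap.comp_assoc, this]
  have heg : e * g = g := LinearMap.ext fun v ↦ he_coe _
  have hgg : g * g = -e := by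
    refine LinearMap.ext fun v ↦ ?_
    have hproj (w : W) : e.rangeRestrict w = w := Subtype.ext (he_coe w)
    have hff (w : W) : f (f w) = -w := LinearMap.congr_fun hf w
    simp [g, hproj, hff]
  refine ⟨1 - e + g, ?_⟩
  simp only [mul_add, add_mul, mul_sub, sub_mul, one_mul, mul_one, hgg, heg, hge, he.eq, two_mul]
  abel

lemma isSquare_one_sub_two_mul_of_isIdempotentElem_matrix [DivisionRing D] (hi : i * i = -1)
    {m : Type*} [Fintype m] [DecidableEq m] {E : Matrix m m D} (hE : IsIdempotentElem E) :
    IsSquare (1 - 2 * E) := by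
  -- Over a noncommutative `D`, matrices act linearly on the left module of row vectors, which
  -- reverses products; squares are not affected.
  have he : IsIdempotentElem (E.toLinearMapRight' : Module.End D (m → D)) := by
    rw [IsIdempotentElem, Module.End.mul_eq_comp, ← Matrix.toLinearMapRight'_mul, hE.eq]
  obtain ⟨f, hf⟩ := isSquare_one_sub_two_mul_of_isIdempotentElem_end hi he
  refine ⟨LinearMap.toMatrixRight' f, Matrix.toLinearMapRight'.injective ?_⟩
  rw [Matrix.toLinearMapRight'_mul]
  simpa [two_mul, Module.End.mul_eq_comp, Module.End.one_eq_id] using hf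

end SquareRoots

lemma exists_isIdempotentElem_eq_one_sub_two_mul {R : Type*} [Ring R] [Invertible (2 : R)] {x : R}
    (hx : x * x = 1) : ∃ e : R, IsIdempotentElem e ∧ x = 1 - 2 * e := by
  refine ⟨⅟2 * (1 - x), ?_, by simp⟩
  have hcomm : Commute (1 - x) (⅟2) := (Commute.ofNat_right _ 2).invOf_right
  have hsq : (1 - x) * (1 - x) = 2 * (1 - x) := by
    rw [mul_sub, sub_mul, sub_mul, hx]
    noncomm_ring
  rw [IsIdempotentElem, hcomm.mul_mul_mul_comm, hsq, mul_assoc, invOf_mul_cancel_left]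

section QuaternionicDeterminant

variable {m : Type*}

lemma qc1_mul (p q : Quaternion ℝ) :
    qc1 (p * q) = qc1 p * qc1 q - qc2 p * (starRingEnd ℂ) (qc2 q) := by
  apply Complex.ext <;> simp [qc1, qc2] <;> ring

lemma qc2_mul (p q : Quaternion ℝ) :
    qc2 (p * q) = qc1 p * qc2 q + qc2 p * (starRingEnd ℂ) (qc1 q) := by
  apply Complex.ext <;> simp [qc1, qc2] <;> ring

lemma qc1_sum {ι : Type*} (s : Finset ι) (f : ι → Quaternion ℝ) :
    qc1 (∑ i ∈ s, f i) = ∑ i ∈ s, qc1 (f i) :=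
  map_sum (AddMonoidHom.mk' qc1 fun _ _ ↦ Complex.ext (by simp [qc1]) (by simp [qc1])) f s

lemma qc2_sum {ι : Type*} (s : Finset ι) (f : ι → Quaternion ℝ) :
    qc2 (∑ i ∈ s, f i) = ∑ i ∈ s, qc2 (f i) :=
  map_sum (AddMonoidHom.mk' qc2 fun _ _ ↦ Complex.ext (by simp [qc2]) (by simp [qc2])) f s

lemma Phi_one [DecidableEq m] : Phi (1 : Matrix m m (Quaternion ℝ)) = 1 := by
  have hqc1 : qc1 1 = 1 := Complex.ext rfl rfl
  have hqc1' : qc1 0 = 0 := Complex.ext rfl rfl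
  have hqc2 : qc2 1 = 0 := Complex.ext rfl rfl
  have hqc2' : qc2 0 = 0 := Complex.ext rfl rfl
  rw [Phi, ← Matrix.fromBlocks_one]
  congr 1 <;> ext i j <;> by_cases h : i = j <;>
    simp [Matrix.one_apply, h, hqc1, hqc1', hqc2, hqc2']

variable [Fintype m]

lemma Phi_mul (X Y : Matrix m m (Quaternion ℝ)) : Phi (X * Y) = Phi X * Phi Y := by
  rw [Phi, Phi, Phi, Matrix.fromBlocks_multiply]
  congr 1 <;> ext i j <;>
    simp [Matrix.mul_apply, qc1_sum, qc2_sum, qc1_mul, qc2_mul, Finset.sum_add_distrib,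
      Finset.sum_sub_distrib] <;> ring

variable [DecidableEq m]

lemma qdet_mul (X Y : Matrix m m (Quaternion ℝ)) : qdet (X * Y) = qdet X * qdet Y := by
  rw [qdet, Phi_mul, Matrix.det_mul, qdet, qdet]

lemma qdet_one : qdet (1 : Matrix m m (Quaternion ℝ)) = 1 := by
  rw [qdet, Phi_one, Matrix.det_one]

lemma conj_Phi (X : Matrix m m (Quaternion ℝ)) :
    (starRingEnd ℂ).mapMatrix (Phi X) = Matrix.J m ℂ * Phi X * (Matrix.J m ℂ)⁻¹ := by
  rw [Matrix.J_inv]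
  simp only [Matrix.J, Phi, Matrix.fromBlocks_multiply, Matrix.fromBlocks_neg,
    RingHom.mapMatrix_apply, Matrix.fromBlocks_map]
  congr 1 <;> ext i j <;> simp

lemma conj_qdet (X : Matrix m m (Quaternion ℝ)) : (starRingEnd ℂ) (qdet X) = qdet X := by
  have hJ : IsUnit (Matrix.J m ℂ) :=
    (Matrix.isUnit_iff_isUnit_det _).mpr (Matrix.isUnit_det_J m ℂ)
  rw [qdet, RingHom.map_det, conj_Phi, Matrix.det_conj hJ]

lemma C2H_I_mul_self : C2H Complex.I * C2H Complex.I = -1 := by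
  rw [Quaternion.ext_iff]
  simp only [Quaternion.re_mul, Quaternion.imI_mul, Quaternion.imJ_mul, Quaternion.imK_mul,
    Quaternion.re_neg, Quaternion.imI_neg, Quaternion.imJ_neg, Quaternion.imK_neg,
    Quaternion.re_one, Quaternion.imI_one, Quaternion.imJ_one, Quaternion.imK_one]
  simp [C2H]

lemma qdet_eq_one_of_mul_self_eq_one {X : Matrix m m (Quaternion ℝ)} (hX : X * X = 1) :
    qdet X = 1 := by
  let : Invertible (2 : Matrix m m (Quaternion ℝ)) :=
    (Invertible.map (algebraMap ℝ (Matrix m m (Quaternion ℝ))) 2).copy _ (map_ofNat _ 2).symm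
  obtain ⟨E, hE, hXE⟩ := exists_isIdempotentElem_eq_one_sub_two_mul hX
  obtain ⟨K, hK⟩ := isSquare_one_sub_two_mul_of_isIdempotentElem_matrix C2H_I_mul_self hE
  obtain ⟨d, hd⟩ := Complex.conj_eq_iff_real.mp (conj_qdet K)
  have hdet : qdet X = (d * d : ℝ) := by rw [hXE, hK, qdet_mul, hd, Complex.ofReal_mul]
  have hsq : d * d * (d * d) = 1 := by
    have : qdet X * qdet X = 1 := by rw [← qdet_mul, hX, qdet_one]
    rw [hdet] at this
    exact_mod_cast this
  rcases mul_self_eq_one_iff.mp hsq with h | h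
  · rw [hdet, h, Complex.ofReal_one]
  · linarith [mul_self_nonneg d]

theorem conj_to_neg_inv_iff_by_involution_general (A : (Matrix m m (Quaternion ℝ))ˣ) :
    (∃ g : (Matrix m m (Quaternion ℝ))ˣ, g * A * g⁻¹ = -A⁻¹) ↔
      ∃ h : (Matrix m m (Quaternion ℝ))ˣ,
        qdet h.val = 1 ∧ h * h = 1 ∧ h * A * h⁻¹ = -A⁻¹ := by
  refine ⟨fun ⟨g, hg⟩ ↦ ?_, fun ⟨h, _, _, hconj⟩ ↦ ⟨h, hconj⟩⟩
  obtain ⟨h, hinv, hconj⟩ := exists_involution_conj_eq_neg_inv hg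
  exact ⟨h, qdet_eq_one_of_mul_self_eq_one (congrArg Units.val hinv), hinv, hconj⟩

end QuaternionicDeterminant

/-- For `A ∈ SL(n, ℍ)`, there is `g ∈ SL(n, ℍ)` with `g A g⁻¹ = -A⁻¹` if and only if there
is an involution `h ∈ SL(n, ℍ)` with `h A h⁻¹ = -A⁻¹`. -/
theorem conj_to_neg_inv_iff_by_involution (n : ℕ)
    (A : (Matrix (Fin n) (Fin n) (Quaternion ℝ))ˣ) (hA : qdet A.val = 1) :
    (∃ g : (Matrix (Fin n) (Fin n) (Quaternion ℝ))ˣ,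
        qdet g.val = 1 ∧ g * A * g⁻¹ = -A⁻¹) ↔
      ∃ h : (Matrix (Fin n) (Fin n) (Quaternion ℝ))ˣ,
        qdet h.val = 1 ∧ h * h = 1 ∧ h * A * h⁻¹ = -A⁻¹ := by
  refine ⟨fun ⟨g, _, hg⟩ ↦ (conj_to_neg_inv_iff_by_involution_general A).mp ⟨g, hg⟩, ?_⟩
  exact fun ⟨h, hdet, _, hconj⟩ ↦ ⟨h, hdet, hconj⟩
end
end

section
/- Let A ∈ M(n,ℍ) be the block-diagonal matrix A = diag(A₁, A₂) with A₁ ∈ M(m,ℍ) and A₂ ∈ M(n−m,ℍ), 1 ≤ m < n, and suppose no right eigenvalue of A₁ is similar in ℍ to any right eigenvalue of A₂ (i.e., there are no nonzero vectors v, w and quaternions λ, μ with A₁v = vλ, A₂w = wμ, and λ, μ conjugate in ℍ). If B ∈ M(n,ℍ) satisfies AB = BA, then B = diag(B₁, B₂) is block-diagonal with the same block sizes, and B₁A₁ = A₁B₁ and B₂A₂ = A₂B₂. -/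
/-!
The off-diagonal blocks `Y` of `B` satisfy Sylvester equations `A₁ Y = Y A₂` and `A₂ Y = Y A₁`.
Real polynomials act centrally, so such a `Y` vanishes as soon as the minimal polynomials of
`A₁` and `A₂` over `ℝ` are coprime. If they are not, they share a root `a` in `ℂ ⊆ ℍ`, and such
an `a` is a right eigenvalue of both blocks `A`: the minimal polynomial of `a` over `ℝ` divides
that of `A` as well as `X² - 2 Re(a) X + |a|²`, so some `w ≠ 0` satisfies
`0 = (A² - 2 Re(a) A + |a|²) w = A u - u a` with `u = A w - w ā`. Either `u` is an eigenvector
for `a`, or `u = 0` and `w` is one for `ā`, which is similar to `a`.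
-/

open Matrix Polynomial Quaternion
open scoped RightActions

section RightEigenvalues

variable {n R : Type*} [Fintype n] [Semiring R]

/-- The set of right eigenvalues of a square matrix over a possibly noncommutative semiring.
Here `v <• a` is the vector with entries `v i * a`. -/
def rightEigenvalues (A : Matrix n n R) : Set R :=
  {a | ∃ v : n → R, v ≠ 0 ∧ A *ᵥ v = v <• a}

theorem mem_rightEigenvalues_of_semiconjBy [NoZeroDivisors R] {A : Matrix n n R} {h a b : R}
    (hh : h ≠ 0) (hab : SemiconjBy h a b) (hb : b ∈ rightEigenvalues A) :
    a ∈ rightEigenvalues A := by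
  obtain ⟨v, hv, hAv⟩ := hb
  refine ⟨v <• h, fun hvh ↦ hv ?_, ?_⟩
  · funext i
    exact (mul_eq_zero.1 (congrFun hvh i)).resolve_right hh
  · rw [mulVec_smul, hAv, smul_smul, smul_smul, ← MulOpposite.op_mul, ← MulOpposite.op_mul, hab.eq]

end RightEigenvalues

section PolynomialsInMatrices

variable {m n R D : Type*} [Fintype m] [Fintype n] [DecidableEq m] [DecidableEq n]

theorem aeval_mul_eq_mul_aeval [CommSemiring R] [Semiring D] [Algebra R D] {A : Matrix m m D}
    {C : Matrix n n D} {Y : Matrix m n D} (h : A * Y = Y * C) (p : R[X]) :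
    aeval A p * Y = Y * aeval C p := by
  have pow_mul_eq (j : ℕ) : A ^ j * Y = Y * C ^ j := by
    induction j with
    | zero => simp
    | succ j ih =>
      rw [pow_succ, Matrix.mul_assoc, h, ← Matrix.mul_assoc, ih, Matrix.mul_assoc, ← pow_succ]
  simp [aeval_eq_sum_range, Matrix.sum_mul, Matrix.mul_sum, pow_mul_eq]

theorem eq_zero_of_mul_eq_mul_of_isCoprime [CommSemiring R] [Semiring D] [Algebra R D]
    {A : Matrix m m D} {C : Matrix n n D} {Y : Matrix m n D} {p q : R[X]} (hpq : IsCoprime p q)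
    (hp : aeval A p = 0) (hq : aeval C q = 0) (h : A * Y = Y * C) : Y = 0 := by
  obtain ⟨s, t, hst⟩ := hpq
  have ht : aeval A (t * q) = 1 := by
    simpa [hp] using congrArg (aeval A) hst
  calc
    Y = aeval A (t * q) * Y := by rw [ht, Matrix.one_mul]
    _ = Y * aeval C (t * q) := aeval_mul_eq_mul_aeval h _
    _ = 0 := by rw [map_mul, hq, mul_zero, Matrix.mul_zero]

theorem exists_aeval_mulVec_eq_zero_of_dvd_minpoly [Field R] [Ring D] [Algebra R D]
    {A : Matrix n n D} (hA : IsIntegral R A) {p : R[X]} (hp : ¬IsUnit p)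
    (hpA : p ∣ minpoly R A) : ∃ w : n → D, w ≠ 0 ∧ aeval A p *ᵥ w = 0 := by
  obtain ⟨r, hr⟩ := hpA
  have hr_ne : r ≠ 0 := right_ne_zero_of_mul (hr ▸ minpoly.ne_zero hA)
  have hr_dvd : DvdNotUnit r (minpoly R A) := ⟨hr_ne, p, hp, by rw [hr, mul_comm]⟩
  have hrA : aeval A r ≠ 0 := fun h ↦ (dvd_and_not_dvd_iff.2 hr_dvd).2 (minpoly.dvd R A h)
  obtain ⟨j, hj⟩ : ∃ j, (aeval A r).col j ≠ 0 := by
    contrapose! hrA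
    ext i j
    exact congrFun (hrA j) i
  refine ⟨(aeval A r).col j, hj, ?_⟩
  rw [← mulVec_single_one, mulVec_mulVec, ← map_mul, ← hr, minpoly.aeval, zero_mulVec]

end PolynomialsInMatrices

section ReducedCharpoly

variable {n R : Type*} [CommRing R]

/-- The reduced characteristic polynomial `X² - tr(a) X + nr(a)` of a quaternion, whose
coefficients are the reduced trace `a + ā` and the reduced norm `a ā`. -/
noncomputable def reducedCharpoly (a : ℍ[R]) : R[X] :=
  X ^ 2 - C (2 * a.re) * X + C (normSq a)

theorem aeval_reducedCharpoly_self (a : ℍ[R]) : aeval a (reducedCharpoly a) = 0 :=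
  calc
    aeval a (reducedCharpoly a) = a ^ 2 - ↑(2 * a.re) * a + ↑(normSq a) := by
      rw [reducedCharpoly, map_add, map_sub, map_mul, map_pow, aeval_X, aeval_C, aeval_C,
        Quaternion.algebraMap_def]
    _ = 0 := by
      rw [← star_add_self', ← star_mul_self]
      noncomm_ring

theorem exists_semiconjBy_star [Nontrivial R] (a : ℍ[R]) :
    ∃ h : ℍ[R], h ≠ 0 ∧ SemiconjBy h a (star a) := by
  -- A purely imaginary quaternion orthogonal to the imaginary part of `a` will do.
  obtain ⟨x, y, hxy, horth⟩ : ∃ x y : R, ¬(x = 0 ∧ y = 0) ∧ x * a.imI + y * a.imJ = 0 := by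
    by_cases ha : a.imI = 0 ∧ a.imJ = 0
    · exact ⟨1, 0, by simp, by simp [ha.1]⟩
    · exact ⟨-a.imJ, a.imI, by simpa [and_comm] using ha, by ring⟩
  obtain ⟨h, hre, hI, hJ, hK⟩ : ∃ h : ℍ[R], h.re = 0 ∧ h.imI = x ∧ h.imJ = y ∧ h.imK = 0 :=
    ⟨⟨0, x, y, 0⟩, rfl, rfl, rfl, rfl⟩
  refine ⟨h, fun h0 ↦ hxy ⟨?_, ?_⟩, ?_⟩
  · simp [← hI, h0]
  · simp [← hJ, h0]
  · rw [SemiconjBy]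
    ext
    · simp only [re_mul, re_star, imI_star, imJ_star, imK_star, hre, hI, hJ, hK]
      linear_combination (-2) * horth
    all_goals
      simp only [imI_mul, imJ_mul, imK_mul, re_star, imI_star, imJ_star, imK_star, hre, hI, hJ, hK]
      ring

theorem op_quaternion_coe_smul (r : R) (u : n → ℍ[R]) : u <• (r : ℍ[R]) = r • u :=
  funext fun i ↦ mul_coe_eq_smul r (u i)

theorem aeval_reducedCharpoly_mulVec [Fintype n] [DecidableEq n] (A : Matrix n n ℍ[R]) (a : ℍ[R])
    (w : n → ℍ[R]) :
    aeval A (reducedCharpoly a) *ᵥ w =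
      A *ᵥ (A *ᵥ w - w <• star a) - (A *ᵥ w - w <• star a) <• a := by
  have trace_smul (u : n → ℍ[R]) : (2 * a.re) • u = u <• star a + u <• a := by
    rw [← add_smul, ← MulOpposite.op_add, star_add_self', op_quaternion_coe_smul]
  have norm_smul : normSq a • w = (w <• star a) <• a := by
    rw [smul_smul, ← MulOpposite.op_mul, star_mul_self, op_quaternion_coe_smul]
  calc
    aeval A (reducedCharpoly a) *ᵥ w =
        A *ᵥ (A *ᵥ w) - (2 * a.re) • (A *ᵥ w) + normSq a • w := by
      rw [reducedCharpoly, map_add, map_sub, map_mul, map_pow, aeval_X, aeval_C, aeval_C,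
        add_mulVec, sub_mulVec, pow_two, ← mulVec_mulVec, ← mulVec_mulVec]
      simp only [Algebra.algebraMap_eq_smul_one, smul_mulVec, one_mulVec]
    _ = A *ᵥ (A *ᵥ w - w <• star a) - (A *ᵥ w - w <• star a) <• a := by
      rw [trace_smul, norm_smul, mulVec_sub, mulVec_smul, smul_sub]
      abel

end ReducedCharpoly

section RootsOfMinpoly

variable {n R : Type*} [Fintype n] [DecidableEq n]

theorem mem_rightEigenvalues_of_aeval_reducedCharpoly_mulVec_eq_zero [CommRing R] [LinearOrder R]
    [IsStrictOrderedRing R] {A : Matrix n n ℍ[R]} {a : ℍ[R]} {w : n → ℍ[R]} (hw : w ≠ 0)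
    (h : aeval A (reducedCharpoly a) *ᵥ w = 0) : a ∈ rightEigenvalues A := by
  rw [aeval_reducedCharpoly_mulVec, sub_eq_zero] at h
  by_cases hu : A *ᵥ w - w <• star a = 0
  · obtain ⟨q, hq, hqa⟩ := exists_semiconjBy_star a
    exact mem_rightEigenvalues_of_semiconjBy hq hqa ⟨w, hw, sub_eq_zero.1 hu⟩
  · exact ⟨_, hu, h⟩

theorem mem_rightEigenvalues_of_aeval_minpoly_eq_zero [Field R] [LinearOrder R]
    [IsStrictOrderedRing R] {A : Matrix n n ℍ[R]} {a : ℍ[R]} (ha : aeval a (minpoly R A) = 0) :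
    a ∈ rightEigenvalues A := by
  obtain ⟨w, hw, hAw⟩ := exists_aeval_mulVec_eq_zero_of_dvd_minpoly (.of_finite R A)
    (minpoly.not_isUnit R a) (minpoly.dvd R a ha)
  obtain ⟨s, hs⟩ := minpoly.dvd R a (aeval_reducedCharpoly_self a)
  refine mem_rightEigenvalues_of_aeval_reducedCharpoly_mulVec_eq_zero hw ?_
  rw [hs, mul_comm, map_mul, ← mulVec_mulVec, hAw, mulVec_zero]

end RootsOfMinpoly

section Sylvester

variable {m n : Type*} [Fintype m] [Fintype n]

theorem isCoprime_minpoly_of_disjoint_rightEigenvalues [DecidableEq m] [DecidableEq n]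
    {A : Matrix m m ℍ[ℝ]} {C : Matrix n n ℍ[ℝ]}
    (h : Disjoint (rightEigenvalues A) (rightEigenvalues C)) :
    IsCoprime (minpoly ℝ A) (minpoly ℝ C) := by
  rw [isCoprime_iff_aeval_ne_zero_of_isAlgClosed ℝ ℂ]
  by_contra! hroot
  obtain ⟨z, hzA, hzC⟩ := hroot
  refine Set.disjoint_left.1 h
    (mem_rightEigenvalues_of_aeval_minpoly_eq_zero (a := ofComplex z) ?_)
    (mem_rightEigenvalues_of_aeval_minpoly_eq_zero ?_) <;>
    simp only [aeval_algHom_apply, hzA, hzC, map_zero]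

theorem eq_zero_of_mul_eq_mul_of_disjoint_rightEigenvalues {A : Matrix m m ℍ[ℝ]}
    {C : Matrix n n ℍ[ℝ]} {Y : Matrix m n ℍ[ℝ]}
    (hdisj : Disjoint (rightEigenvalues A) (rightEigenvalues C)) (h : A * Y = Y * C) : Y = 0 := by
  classical
  exact eq_zero_of_mul_eq_mul_of_isCoprime (isCoprime_minpoly_of_disjoint_rightEigenvalues hdisj)
    (minpoly.aeval ℝ A) (minpoly.aeval ℝ C) h

end Sylvester

/-- If `A = diag(A₁, A₂)` is block-diagonal over the quaternions and no right eigenvalue of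
`A₁` is similar to a right eigenvalue of `A₂`, then any matrix commuting with `A` is
block-diagonal with the same block sizes, the blocks commuting with `A₁` resp. `A₂`. -/
theorem commuting_with_blockDiagonal_is_blockDiagonal (m k : ℕ) (hm : 1 ≤ m) (hk : 1 ≤ k)
    (A1 : Matrix (Fin m) (Fin m) (Quaternion ℝ)) (A2 : Matrix (Fin k) (Fin k) (Quaternion ℝ))
    (hsep : ∀ (lam mu : Quaternion ℝ) (v : Fin m → Quaternion ℝ) (w : Fin k → Quaternion ℝ),
      v ≠ 0 → w ≠ 0 →
      A1.mulVec v = (fun i => v i * lam) → A2.mulVec w = (fun i => w i * mu) →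
      ¬∃ q : Quaternion ℝ, q ≠ 0 ∧ mu = q * lam * q⁻¹)
    (B : Matrix (Fin m ⊕ Fin k) (Fin m ⊕ Fin k) (Quaternion ℝ))
    (hB : Matrix.fromBlocks A1 0 0 A2 * B = B * Matrix.fromBlocks A1 0 0 A2) :
    ∃ (B1 : Matrix (Fin m) (Fin m) (Quaternion ℝ)) (B2 : Matrix (Fin k) (Fin k) (Quaternion ℝ)),
      B = Matrix.fromBlocks B1 0 0 B2 ∧ B1 * A1 = A1 * B1 ∧ B2 * A2 = A2 * B2 := by
  have hdisj : Disjoint (rightEigenvalues A1) (rightEigenvalues A2) :=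
    Set.disjoint_left.2 fun a ⟨v, hv, hAv⟩ ⟨w, hw, hAw⟩ ↦
      hsep a a v w hv hw hAv hAw ⟨1, one_ne_zero, by simp⟩
  obtain ⟨B1, Y, Z, B2, rfl⟩ : ∃ B1 Y Z B2, B = fromBlocks B1 Y Z B2 :=
    ⟨_, _, _, _, (fromBlocks_toBlocks B).symm⟩
  simp only [fromBlocks_multiply, fromBlocks_inj, Matrix.zero_mul, Matrix.mul_zero, add_zero,
    zero_add] at hB
  obtain ⟨hB1, hY, hZ, hB2⟩ := hB
  obtain rfl : Y = 0 := eq_zero_of_mul_eq_mul_of_disjoint_rightEigenvalues hdisj hY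
  obtain rfl : Z = 0 := eq_zero_of_mul_eq_mul_of_disjoint_rightEigenvalues hdisj.symm hZ
  exact ⟨B1, B2, rfl, hB1.symm, hB2.symm⟩
end
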